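/- Let A be a brick-finite finite-dimensional algebra over an algebraically closed field and let 𝒳 be a Hom-orthogonal set of finite-dimensional A-modules. Then the cardinality of 𝒳 is at most the number of isomorphism classes of simple A-modules that occur as a composition factor (Jordan–Hölder factor) of some module belonging to 𝒳. -/

import Mathlib

universe u v

open Module

/-- A finite-dimensional left module over the `k`-algebra `A`. -/
structure FDMod (k A : Type u) [Field k] [Ring A] [Algebra k A] : Type (u + 1) where
  carrier : Type u
  [addCommGroup : AddCommGroup carrier]
  [moduleK : Module k carrier]
  [moduleA : Module A carrier]
  [tower : IsScalarTower k A carrier]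
  [fd : FiniteDimensional k carrier]

attribute [instance] FDMod.addCommGroup FDMod.moduleK FDMod.moduleA FDMod.tower FDMod.fd

variable {k A : Type u} [Field k] [Ring A] [Algebra k A]

/-- `M` is a brick: `M ≠ 0` and every `A`-endomorphism of `M` is a `k`-scalar,
i.e. `End_A(M) ≅ k`. -/
def FDMod.IsBrick (M : FDMod k A) : Prop :=
  Nontrivial M.carrier ∧ ∀ f : M.carrier →ₗ[A] M.carrier, ∃ c : k, ∀ x : M.carrier, f x = c • x

/-- `M` and `N` are Hom-orthogonal: `Hom_A(M,N) = 0` and `Hom_A(N,M) = 0`. -/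
def FDMod.HomOrth (M N : FDMod k A) : Prop :=
  (∀ f : M.carrier →ₗ[A] N.carrier, f = 0) ∧ (∀ f : N.carrier →ₗ[A] M.carrier, f = 0)

/-- `M` and `N` are isomorphic as `A`-modules. -/
def FDMod.Iso (M N : FDMod k A) : Prop :=
  Nonempty (M.carrier ≃ₗ[A] N.carrier)

/-- A family of modules forms a Hom-orthogonal set: the modules are nonzero,
pairwise non-isomorphic and pairwise Hom-orthogonal. -/
def HomOrthFamily {I : Type v} (X : I → FDMod k A) : Prop :=
  (∀ i, Nontrivial (X i).carrier) ∧
  (∀ i j, i ≠ j → ¬(X i).Iso (X j)) ∧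
  (∀ i j, i ≠ j → (X i).HomOrth (X j))

/-- `A` is brick-finite: there are only finitely many isomorphism classes of bricks. -/
def BrickFinite (k A : Type u) [Field k] [Ring A] [Algebra k A] : Prop :=
  ∃ (m : ℕ) (f : Fin m → FDMod k A), ∀ N : FDMod k A, N.IsBrick → ∃ i, N.Iso (f i)

/-- `A` has rank `n`: there are exactly `n` isomorphism classes of simple modules. -/
def HasRank (k A : Type u) [Field k] [Ring A] [Algebra k A] (n : ℕ) : Prop :=
  ∃ S : Fin n → FDMod k A,
    (∀ i, IsSimpleModule A (S i).carrier) ∧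
    (∀ i j, i ≠ j → ¬(S i).Iso (S j)) ∧
    (∀ T : FDMod k A, IsSimpleModule A T.carrier → ∃ i, T.Iso (S i))

/-- `S` is a (simple) subquotient of `X`, i.e. `S` occurs as a composition factor
of `X` when `S` is simple and `X` has finite length. -/
def FDMod.IsSubquotientOf {k A : Type u} [Field k] [Ring A] [Algebra k A]
    (S X : FDMod k A) : Prop :=
  ∃ (q : Submodule A X.carrier) (p : Submodule A q), Nonempty ((q ⧸ p) ≃ₗ[A] S.carrier)

/-!
The classes of the modules `X j` in the Grothendieck group are linearly independent, so their number
is bounded by the number of simple modules that occur in them.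

Suppose that `∑ c j [X j] = 0` with some `c i > 0`, and let `T` be the torsion class of all modules
without nonzero maps to the `X j` with `c j ≤ 0`. By Hom-orthogonality the `X j` with `c j > 0` lie
in `T`, and the others are torsion-free. The relation is contradicted by a linear form `θ` on the
Grothendieck group that is nonnegative on `T`, positive at `X i` and nonpositive on torsion-free
modules. If `Q` is a member of `T` that is projective relative to `T` and maps onto `X i`, then a
minimal projective presentation `Q₁ → Q₀ → Q → 0` yields
`θ = dim Hom(Q₀, -) - dim Hom(Q₁, -)`, which agrees with `dim Hom(Q, -)` on `T`.

Such a `Q` exists because `A` is brick-finite: a torsion class is determined by the bricks it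
contains, so there are finitely many of them, and relative projectives can be passed down along
covers `T ⋖ T'`, starting with the class of all modules. If `T'` has enough relative projectives,
then a right minimal relatively projective cover in `T'` of a member of `T` already lies in `T`.
Closing up under kernels again uses finiteness, through a universal element of a relatively
projective generator.
-/

/-! ### Right minimal maps and pushouts -/

section ArbitraryModules

variable {R : Type*} [Ring R] {M N P : Type*} [AddCommGroup M] [Module R M] [AddCommGroup N]
  [Module R N] [AddCommGroup P] [Module R P]

theorem exists_comp_eq_of_ker_le_ker {f : M →ₗ[R] N} (hf : Function.Surjective f)
    {g : M →ₗ[R] P} (h : LinearMap.ker f ≤ LinearMap.ker g) :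
    ∃ g' : N →ₗ[R] P, g' ∘ₗ f = g :=
  ⟨(LinearMap.ker f).liftQ g h ∘ₗ (f.quotKerEquivOfSurjective hf).symm, by ext; simp⟩

/-- A map `φ : M → N` is right minimal if every endomorphism `η` of `M` with `φ ∘ η = φ` is
surjective; for modules of finite length this says that `η` is an automorphism. -/
def IsRightMinimal (φ : M →ₗ[R] N) : Prop :=
  ∀ η : M →ₗ[R] M, φ ∘ₗ η = φ → Function.Surjective η

/-- Composing `e` with any map compatible with `φ` cannot shrink the image of `e`. -/
theorem isRightMinimal_comp_subtype_range {φ : M →ₗ[R] N} {e : M →ₗ[R] M}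
    (he : MinimalFor (fun e : M →ₗ[R] M => φ ∘ₗ e = φ) LinearMap.range e) :
    IsRightMinimal (φ ∘ₗ (LinearMap.range e).subtype) := by
  rintro η hη ⟨y, hy⟩
  have hηe : φ ∘ₗ ((LinearMap.range e).subtype ∘ₗ η ∘ₗ e.rangeRestrict) = φ := by
    ext x
    exact (LinearMap.congr_fun hη (e.rangeRestrict x)).trans (LinearMap.congr_fun he.prop x)
  have hle : LinearMap.range ((LinearMap.range e).subtype ∘ₗ η ∘ₗ e.rangeRestrict) ≤
      LinearMap.range e := by
    rintro _ ⟨x, rfl⟩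
    exact (η (e.rangeRestrict x)).2
  obtain ⟨x, hx⟩ := he.le_of_le hηe hle hy
  exact ⟨e.rangeRestrict x, Subtype.ext hx⟩

theorem exists_retract_isRightMinimal [IsArtinian R M] [IsNoetherian R M] (φ : M →ₗ[R] N) :
    ∃ (p : Submodule R M) (r : M →ₗ[R] p), r ∘ₗ p.subtype = LinearMap.id ∧
      φ ∘ₗ p.subtype ∘ₗ r = φ ∧ IsRightMinimal (φ ∘ₗ p.subtype) := by
  obtain ⟨e, hmin⟩ := exists_minimalFor_of_wellFoundedLT
    (fun e : M →ₗ[R] M => φ ∘ₗ e = φ) LinearMap.range ⟨LinearMap.id, φ.comp_id⟩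
  have he : φ ∘ₗ e = φ := hmin.prop
  have hrange := isRightMinimal_comp_subtype_range hmin
  let e' : LinearMap.range e →ₗ[R] LinearMap.range e := e.rangeRestrict ∘ₗ Submodule.subtype _
  have he' : Function.Bijective e' :=
    IsNoetherian.bijective_of_surjective_endomorphism e' <|
      hrange e' (by ext x; exact LinearMap.congr_fun he x)
  let u := LinearEquiv.ofBijective e' he'
  refine ⟨LinearMap.range e, u.symm ∘ₗ e.rangeRestrict, ?_, ?_, hrange⟩
  · ext x
    exact congrArg Subtype.val (u.symm_apply_apply x)
  · ext x
    have hex : e (u.symm (e.rangeRestrict x)) = e x :=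
      congrArg Subtype.val (u.apply_symm_apply (e.rangeRestrict x))
    exact (LinearMap.congr_fun he _).symm.trans <|
      (congrArg φ hex).trans (LinearMap.congr_fun he x)

theorem IsRightMinimal.eq_top_of_sup_ker_eq_top [Module.Projective R M] {π : M →ₗ[R] N}
    (hmin : IsRightMinimal π) (hπ : Function.Surjective π) {p : Submodule R M}
    (hp : p ⊔ LinearMap.ker π = ⊤) : p = ⊤ := by
  have hs : Function.Surjective (π ∘ₗ p.subtype) := by
    rw [← LinearMap.range_eq_top, LinearMap.range_comp, Submodule.range_subtype,
      ← LinearMap.range_eq_top.2 hπ, ← Submodule.map_top, ← hp, Submodule.map_sup,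
      LinearMap.le_ker_iff_map.1 le_rfl, sup_bot_eq]
  obtain ⟨l, hl⟩ := Module.projective_lifting_property (π ∘ₗ p.subtype) π hs
  rw [eq_top_iff, ← LinearMap.range_eq_top.2 (hmin (p.subtype ∘ₗ l) hl), LinearMap.range_comp]
  exact Submodule.map_subtype_le p _

variable (R M) in
theorem exists_projective_cover [IsArtinianRing R] [Module.Finite R M] :
    ∃ (n : ℕ) (P : Submodule R (Fin n → R)) (π : P →ₗ[R] M),
      Module.Projective R P ∧ Function.Surjective π ∧ IsRightMinimal π := by
  obtain ⟨n, φ, hφ⟩ := Module.Finite.exists_fin' R M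
  obtain ⟨P, r, hr, hφr, hmin⟩ := exists_retract_isRightMinimal φ
  refine ⟨n, P, φ ∘ₗ P.subtype, Module.Projective.of_split P.subtype r hr, ?_, hmin⟩
  rw [← hφr, ← LinearMap.comp_assoc] at hφ
  exact Function.Surjective.of_comp hφ

/-- The pushout of `0 → ker p → P → N → 0` along `h : ker p → M`, realised as the quotient of
`P × M` by `W`. -/
theorem exists_pushout_of_ker {p : P →ₗ[R] N} (hp : Function.Surjective p)
    (h : LinearMap.ker p →ₗ[R] M) :
    ∃ (W : Submodule R (P × M)) (q : ((P × M) ⧸ W) →ₗ[R] N),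
      Function.Surjective q ∧
      Function.Injective (W.mkQ ∘ₗ LinearMap.inr R P M) ∧
      Function.Exact (W.mkQ ∘ₗ LinearMap.inr R P M) q ∧
      W.mkQ ∘ₗ LinearMap.inl R P M ∘ₗ (LinearMap.ker p).subtype =
        W.mkQ ∘ₗ LinearMap.inr R P M ∘ₗ h := by
  let W : Submodule R (P × M) := LinearMap.range ((LinearMap.ker p).subtype.prod (-h))
  have hW : W ≤ LinearMap.ker (p ∘ₗ LinearMap.fst R P M) := by
    rintro _ ⟨x, rfl⟩
    exact x.2
  have hmk (x : LinearMap.ker p) : W.mkQ (x, 0) = W.mkQ (0, h x) :=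
    (Submodule.Quotient.eq W).2 ⟨x, by simp⟩
  refine ⟨W, W.liftQ _ hW, fun y => ?_, ?_, fun y => ⟨fun hy => ?_, ?_⟩, LinearMap.ext hmk⟩
  · obtain ⟨x, rfl⟩ := hp y
    exact ⟨W.mkQ (x, 0), rfl⟩
  · rw [injective_iff_map_eq_zero]
    intro m hm
    obtain ⟨x, hx⟩ := (Submodule.Quotient.mk_eq_zero W).1 hm
    obtain ⟨hx₁, rfl⟩ := Prod.ext_iff.1 hx
    have : x = 0 := Subtype.ext hx₁
    simp [this]
  · obtain ⟨⟨x, m⟩, rfl⟩ := W.mkQ_surjective y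
    refine ⟨h ⟨x, hy⟩ + m, ?_⟩
    have hsum : ((x, m) : P × M) = (x, 0) + (0, m) := by simp
    rw [map_add, hsum, map_add]
    exact congrArg (· + W.mkQ (0, m)) (hmk ⟨x, hy⟩).symm
  · rintro ⟨m, rfl⟩
    exact p.map_zero

end ArbitraryModules

namespace FDMod

section Finiteness

variable {V W : Type*} [AddCommGroup V] [Module k V] [Module A V] [IsScalarTower k A V]
  [FiniteDimensional k V] [AddCommGroup W] [Module k W] [Module A W] [IsScalarTower k A W]
  [FiniteDimensional k W]

instance (p : Submodule A V) : FiniteDimensional k p :=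
  inferInstanceAs (FiniteDimensional k (p.restrictScalars k))

instance (p : Submodule A V) : FiniteDimensional k (V ⧸ p) :=
  Module.Finite.of_surjective (p.mkQ.restrictScalars k) p.mkQ_surjective

instance : FiniteDimensional k (V →ₗ[A] W) :=
  Module.Finite.of_injective (LinearMap.restrictScalarsₗ k A V W k)
    (LinearMap.restrictScalars_injective k)

end Finiteness

instance : CoeSort (FDMod k A) (Type u) := ⟨FDMod.carrier⟩

instance (M : FDMod k A) : IsNoetherian A M := isNoetherian_of_tower k inferInstance

instance (M : FDMod k A) : IsArtinian A M := isArtinian_of_tower k inferInstance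

/-- The object of `FDMod k A` given by a finite-dimensional module `V`. -/
abbrev of (k A : Type u) [Field k] [Ring A] [Algebra k A] (V : Type u) [AddCommGroup V]
    [Module k V] [Module A V] [IsScalarTower k A V] [FiniteDimensional k V] : FDMod k A :=
  ⟨V⟩

/-- `X` is generated by `Q`, i.e. `X` is a quotient of a finite power of `Q`. -/
def IsGeneratedBy (X Q : FDMod k A) : Prop :=
  ∃ (ι : Type) (_ : Finite ι) (φ : (ι → Q) →ₗ[A] X), Function.Surjective φ

/-- A finite right `add P`-approximation of `M`: it is assembled from a basis of `Hom(P, M)`. -/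
theorem exists_right_approximation (P M : FDMod k A) :
    ∃ (ι : Type) (_ : Finite ι) (φ : (ι → P) →ₗ[A] M),
      ∀ γ : P →ₗ[A] M, ∃ γ' : P →ₗ[A] (ι → P), φ ∘ₗ γ' = γ := by
  let b := Module.finBasis k (P →ₗ[A] M)
  refine ⟨Fin _, inferInstance, ∑ i, b i ∘ₗ LinearMap.proj i, fun γ =>
    ⟨LinearMap.pi fun i => b.repr γ i • LinearMap.id, ?_⟩⟩
  ext x
  have hγ : (∑ i, b.repr γ i • b i) x = γ x := by rw [b.sum_repr]
  rw [← hγ]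
  simp [-Basis.sum_repr, LinearMap.map_smul_of_tower]

end FDMod

open FDMod

/-! ### Torsion classes -/

/-- A torsion class: a class of modules closed under quotients and extensions and containing the
zero modules. -/
structure TorsionClass (k A : Type u) [Field k] [Ring A] [Algebra k A] where
  carrier : Set (FDMod k A)
  mem_of_surjective : ∀ {X Y : FDMod k A}, X ∈ carrier → ∀ f : X →ₗ[A] Y,
    Function.Surjective f → Y ∈ carrier
  mem_of_extension : ∀ {X : FDMod k A} (p : Submodule A X), of k A p ∈ carrier →
    of k A (X ⧸ p) ∈ carrier → X ∈ carrier
  mem_of_subsingleton : ∀ X : FDMod k A, Subsingleton X → X ∈ carrier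

namespace TorsionClass

instance : SetLike (TorsionClass k A) (FDMod k A) where
  coe := carrier
  coe_injective T U h := by cases T; cases U; congr

instance : PartialOrder (TorsionClass k A) := .ofSetLike _ _

instance : OrderTop (TorsionClass k A) where
  top := ⟨Set.univ, fun _ _ _ => trivial, fun _ _ _ => trivial, fun _ _ => trivial⟩
  le_top _ _ _ := trivial

instance : SemilatticeInf (TorsionClass k A) where
  inf T U :=
    { carrier := {X | X ∈ T ∧ X ∈ U}
      mem_of_surjective := fun hX f hf =>
        ⟨T.mem_of_surjective hX.1 f hf, U.mem_of_surjective hX.2 f hf⟩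
      mem_of_extension := fun p hp hq =>
        ⟨T.mem_of_extension p hp.1 hq.1, U.mem_of_extension p hp.2 hq.2⟩
      mem_of_subsingleton := fun X hX =>
        ⟨T.mem_of_subsingleton X hX, U.mem_of_subsingleton X hX⟩ }
  inf_le_left _ _ _ h := h.1
  inf_le_right _ _ _ h := h.2
  le_inf _ _ _ hT hU _ h := ⟨hT h, hU h⟩

variable {T : TorsionClass k A} {X Y Z : FDMod k A}

theorem range_mem (hX : X ∈ T) (f : X →ₗ[A] Y) : of k A (LinearMap.range f) ∈ T :=
  T.mem_of_surjective hX f.rangeRestrict f.surjective_rangeRestrict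

theorem mem_of_exact (hX : X ∈ T) (hZ : Z ∈ T) {f : X →ₗ[A] Y} {g : Y →ₗ[A] Z}
    (hfg : Function.Exact f g) (hg : Function.Surjective g) : Y ∈ T := by
  have hker : of k A (LinearMap.ker g) ∈ T := by
    rw [hfg.linearMap_ker_eq]
    exact range_mem hX f
  let e := g.quotKerEquivOfSurjective hg
  exact T.mem_of_extension _ hker (T.mem_of_surjective hZ e.symm.toLinearMap e.symm.surjective)

/-- The torsion part `t` of `ker φ`, characterised through the induced map `X ⧸ t → M`. -/
theorem exists_radical_ker (T : TorsionClass k A) {M : Type*} [AddCommGroup M] [Module A M]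
    (φ : X →ₗ[A] M) :
    ∃ (t : Submodule A X) (ht : t ≤ LinearMap.ker φ), of k A t ∈ T ∧
      ∀ Z ∈ T, ∀ f : Z →ₗ[A] X ⧸ t, t.liftQ φ ht ∘ₗ f = 0 → f = 0 := by
  obtain ⟨t, ⟨ht, htT⟩, hmax⟩ := exists_maximal_of_wellFoundedGT
    (fun t : Submodule A X => t ≤ LinearMap.ker φ ∧ of k A t ∈ T)
    ⟨⊥, bot_le, T.mem_of_subsingleton _ inferInstance⟩
  refine ⟨t, ht, htT, fun Z hZ f hf => ?_⟩
  let s : Submodule A X := (LinearMap.range f).comap t.mkQ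
  have hts : t ≤ s := by
    rw [← t.ker_mkQ]
    exact LinearMap.ker_le_comap _
  have hsφ : s ≤ LinearMap.ker φ := by
    rintro x ⟨z, hz⟩
    exact (congrArg (t.liftQ φ ht) hz).symm.trans (LinearMap.congr_fun hf z)
  let g : s →ₗ[A] LinearMap.range f := t.mkQ.restrict fun _ hx => hx
  have hg : Function.Surjective g := by
    rintro ⟨y, hy⟩
    obtain ⟨x, rfl⟩ := t.mkQ_surjective y
    exact ⟨⟨x, hy⟩, rfl⟩
  have hexact : Function.Exact (Submodule.inclusion hts) g := by
    rintro ⟨x, hx⟩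
    rw [Subtype.ext_iff]
    exact (Submodule.Quotient.mk_eq_zero t).trans
      ⟨fun h => ⟨⟨x, h⟩, rfl⟩, fun ⟨y, hy⟩ => hy ▸ y.2⟩
  have hsT : of k A s ∈ T :=
    mem_of_exact (X := of k A t) (Y := of k A s) htT (range_mem (Y := of k A (X ⧸ t)) hZ f)
      hexact hg
  have hst : s ≤ t := hmax ⟨hsφ, hsT⟩ hts
  ext z
  obtain ⟨x, hx⟩ := t.mkQ_surjective (f z)
  rw [← hx]
  exact (Submodule.Quotient.mk_eq_zero t).2 (hst ⟨z, hx.symm⟩)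

/-- `N` is torsion-free with respect to `T`. -/
def IsTorsionFree (T : TorsionClass k A) (N : FDMod k A) : Prop :=
  ∀ X ∈ T, ∀ f : X →ₗ[A] N, f = 0

theorem exists_isTorsionFree_quotient (T : TorsionClass k A) (X : FDMod k A) :
    ∃ t : Submodule A X, of k A t ∈ T ∧ T.IsTorsionFree (of k A (X ⧸ t)) := by
  obtain ⟨t, ht, htT, htf⟩ := T.exists_radical_ker (0 : X →ₗ[A] X)
  refine ⟨t, htT, fun Z hZ f => htf Z hZ f (LinearMap.ext fun z => ?_)⟩
  obtain ⟨x, hx⟩ := t.mkQ_surjective (f z)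
  rw [LinearMap.comp_apply, ← hx]
  rfl

theorem IsTorsionFree.notMem [Nontrivial X] (hX : T.IsTorsionFree X) : X ∉ T := fun h =>
  have ⟨x, hx⟩ := exists_ne (0 : X)
  hx (LinearMap.congr_fun (hX X h LinearMap.id) x)

theorem pi_mem {ι : Type} [Finite ι] {M : ι → FDMod k A} (hM : ∀ i, M i ∈ T) :
    of k A (∀ i, M i) ∈ T := by
  classical
  obtain ⟨t, htT, htf⟩ := T.exists_isTorsionFree_quotient (of k A (∀ i, M i))
  have ht : t = ⊤ := by
    rw [eq_top_iff, ← LinearMap.iSup_range_single (R := A) (φ := fun i => (M i : Type u))]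
    refine iSup_le fun i => ?_
    rintro _ ⟨x, rfl⟩
    have hi := htf (M i) (hM i) (t.mkQ ∘ₗ LinearMap.single A (fun i => (M i : Type u)) i)
    exact (Submodule.Quotient.mk_eq_zero t).1 (LinearMap.congr_fun hi x)
  subst ht
  exact T.mem_of_surjective htT (Submodule.subtype ⊤) fun x => ⟨⟨x, trivial⟩, rfl⟩

theorem prod_mem (hX : X ∈ T) (hY : Y ∈ T) : of k A (X × Y) ∈ T :=
  mem_of_exact hX hY (f := LinearMap.inl A X Y) (g := LinearMap.snd A X Y)
    Function.Exact.inl_snd LinearMap.snd_surjective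

/-- The torsion class `⊥𝒩` of all modules without nonzero maps to members of `𝒩`. -/
def leftPerp (𝒩 : Set (FDMod k A)) : TorsionClass k A where
  carrier := {X | ∀ N ∈ 𝒩, ∀ f : X →ₗ[A] N, f = 0}
  mem_of_surjective := by
    intro X Y hX f hf N hN g
    rw [← LinearMap.cancel_right hf, hX N hN (g ∘ₗ f), LinearMap.zero_comp]
  mem_of_extension := by
    intro X p hp hq N hN f
    have hpf : p ≤ LinearMap.ker f := fun x hx =>
      LinearMap.congr_fun (hp N hN (f ∘ₗ p.subtype)) ⟨x, hx⟩
    rw [← p.liftQ_mkQ f hpf, hq N hN (p.liftQ f hpf), LinearMap.zero_comp]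
  mem_of_subsingleton _ _ _ _ _ := Subsingleton.elim _ _

end TorsionClass

/-! ### Relatively projective modules -/

namespace TorsionClass

variable {T T' : TorsionClass k A} {M X Y Q Q' Q₀ Q₁ : FDMod k A}

/-- `Q` is projective relative to `T`: maps out of `Q` lift along every surjection whose kernel
lies in `T`; equivalently, `Ext¹(Q, -)` vanishes on `T`. It is not required that
`Q` lies in `T`. -/
def IsRelProjective (T : TorsionClass k A) (Q : FDMod k A) : Prop :=
  ∀ ⦃Y Z : FDMod k A⦄ (g : Y →ₗ[A] Z), Function.Surjective g → of k A (LinearMap.ker g) ∈ T →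
    ∀ h : Q →ₗ[A] Z, ∃ l : Q →ₗ[A] Y, g ∘ₗ l = h

namespace IsRelProjective

theorem mono (h : T ≤ T') (hQ : T'.IsRelProjective Q) : T.IsRelProjective Q :=
  fun _ _ g hg hker => hQ g hg (h hker)

theorem of_projective [Module.Projective A Q] : T.IsRelProjective Q :=
  fun _ _ g hg _ h => Module.projective_lifting_property g h hg

theorem of_retract (hQ : T.IsRelProjective Q) {i : Q' →ₗ[A] Q} {r : Q →ₗ[A] Q'}
    (hr : r ∘ₗ i = LinearMap.id) : T.IsRelProjective Q' := by
  intro Y Z g hg hker h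
  obtain ⟨l, hl⟩ := hQ g hg hker (h ∘ₗ r)
  exact ⟨l ∘ₗ i, by rw [← LinearMap.comp_assoc, hl, LinearMap.comp_assoc, hr, LinearMap.comp_id]⟩

theorem pi {ι : Type} [Finite ι] {M : ι → FDMod k A} (hM : ∀ i, T.IsRelProjective (M i)) :
    T.IsRelProjective (of k A (∀ i, M i)) := by
  classical
  cases nonempty_fintype ι
  intro Y Z g hg hker h
  choose l hl using fun i =>
    hM i g hg hker (h ∘ₗ LinearMap.single A (fun i => (M i : Type u)) i)
  refine ⟨LinearMap.lsum A _ ℕ l, LinearMap.pi_ext' fun i => ?_⟩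
  rw [LinearMap.comp_assoc, ← hl i]
  exact congrArg (g ∘ₗ ·) (LinearMap.ext fun x => LinearMap.lsum_piSingle ..)

theorem prod (hX : T.IsRelProjective X) (hY : T.IsRelProjective Y) :
    T.IsRelProjective (of k A (X × Y)) := by
  intro V W g hg hker h
  obtain ⟨l₁, hl₁⟩ := hX g hg hker (h ∘ₗ LinearMap.inl A _ _)
  obtain ⟨l₂, hl₂⟩ := hY g hg hker (h ∘ₗ LinearMap.inr A _ _)
  refine ⟨l₁.coprod l₂, ?_⟩
  rw [LinearMap.comp_coprod, hl₁, hl₂, LinearMap.coprod_comp_inl_inr]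

theorem exists_extension (hQ : T.IsRelProjective Q) {p : X →ₗ[A] Q} (hp : Function.Surjective p)
    (hM : M ∈ T) (h : LinearMap.ker p →ₗ[A] M) :
    ∃ g : X →ₗ[A] M, g ∘ₗ (LinearMap.ker p).subtype = h := by
  obtain ⟨W, q, hq, hinj, hexact, hcomm⟩ := exists_pushout_of_ker hp h
  have hker : of k A (LinearMap.ker q) ∈ T := by
    rw [hexact.linearMap_ker_eq]
    exact range_mem (Y := of k A (_ ⧸ W)) hM _
  obtain ⟨l, hl⟩ := ((hexact.split_tfae hinj hq).out 0 1).1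
    (hQ (Y := of k A (_ ⧸ W)) q hq hker LinearMap.id)
  refine ⟨l ∘ₗ W.mkQ ∘ₗ LinearMap.inl A X M, ?_⟩
  rw [LinearMap.comp_assoc, LinearMap.comp_assoc, hcomm]
  exact congrArg (· ∘ₗ h) hl

/-- Modulo `f (ker π)` the map `f` factors through `ker p` and hence extends to `Q₀`; subtracting
a lift of the extension shrinks the image of `f`. -/
theorem exists_factorization (hQ : T.IsRelProjective Q) [Module.Projective A Q₀]
    {p : Q₀ →ₗ[A] Q} (hp : Function.Surjective p) {π : Q₁ →ₗ[A] LinearMap.ker p}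
    (hπ : Function.Surjective π)
    (hmin : ∀ N : Submodule A Q₁, N ⊔ LinearMap.ker π = ⊤ → N = ⊤)
    (hM : M ∈ T) (f : Q₁ →ₗ[A] M) :
    ∃ g : Q₀ →ₗ[A] M, g ∘ₗ (LinearMap.ker p).subtype ∘ₗ π = f := by
  induction hr : LinearMap.range f using WellFoundedLT.induction generalizing f with
  | ind r ih =>
  subst hr
  let U : Submodule A M := (LinearMap.ker π).map f
  obtain hU | hU := (LinearMap.map_le_range : U ≤ LinearMap.range f).eq_or_lt
  · have hsup : LinearMap.ker f ⊔ LinearMap.ker π = ⊤ := by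
      rw [sup_comm, ← Submodule.comap_map_eq, hU, ← Submodule.map_top, Submodule.comap_map_eq,
        top_sup_eq]
    exact ⟨0, by rw [LinearMap.zero_comp, LinearMap.ker_eq_top.1 (hmin _ hsup)]⟩
  · obtain ⟨h, hh⟩ := exists_comp_eq_of_ker_le_ker hπ (g := U.mkQ ∘ₗ f) fun x hx =>
      (Submodule.Quotient.mk_eq_zero U).2 (Submodule.mem_map_of_mem hx)
    obtain ⟨g', hg'⟩ := hQ.exists_extension hp
      (T.mem_of_surjective (Y := of k A (M ⧸ U)) hM U.mkQ U.mkQ_surjective) h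
    obtain ⟨g, hg⟩ := Module.projective_lifting_property U.mkQ g' U.mkQ_surjective
    let d : Q₁ →ₗ[A] Q₀ := (LinearMap.ker p).subtype ∘ₗ π
    have hgd : U.mkQ ∘ₗ (f - g ∘ₗ d) = 0 := by
      rw [LinearMap.comp_sub, ← LinearMap.comp_assoc, hg, ← LinearMap.comp_assoc, hg', hh, sub_self]
    have hle : LinearMap.range (f - g ∘ₗ d) ≤ U := by
      rwa [LinearMap.range_le_iff_comap, ← U.ker_mkQ, ← LinearMap.ker_comp, LinearMap.ker_eq_top]
    obtain ⟨g'', hg''⟩ := ih _ (hle.trans_lt hU) _ rfl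
    exact ⟨g'' + g, by rw [LinearMap.add_comp, hg'']; exact sub_add_cancel f _⟩

end IsRelProjective

end TorsionClass

/-! ### Torsion classes and bricks -/

namespace TorsionClass

variable {T T' : TorsionClass k A} {B X Y : FDMod k A}

theorem mem_of_iso (hX : X ∈ T) : X.Iso Y → Y ∈ T
  | ⟨e⟩ => T.mem_of_surjective hX e.toLinearMap e.surjective

/-- `B` is simple relative to `T`: it is a nonzero member of `T`, and it has no proper nonzero
submodule that is a quotient of a member of `T`. -/
structure IsRelSimple (T : TorsionClass k A) (B : FDMod k A) : Prop where
  mem : B ∈ T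
  nontrivial : Nontrivial B
  surjective_of_ne_zero : ∀ Z ∈ T, ∀ f : Z →ₗ[A] B, f ≠ 0 → Function.Surjective f

theorem exists_isRelSimple_isTorsionFree (h : ¬T' ≤ T) :
    ∃ B, T'.IsRelSimple B ∧ T.IsTorsionFree B := by
  obtain ⟨X, hXT', hXT⟩ := SetLike.not_le_iff_exists.1 h
  obtain ⟨t, htT, htf⟩ := T.exists_isTorsionFree_quotient X
  have hquot : of k A (X ⧸ t) ∈ T' := T'.mem_of_surjective hXT' t.mkQ t.mkQ_surjective
  have htop : (⊤ : Submodule A (X ⧸ t)) ≠ ⊥ := fun hbot =>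
    hXT <| T.mem_of_extension t htT <| T.mem_of_subsingleton _ <|
      (Submodule.subsingleton_iff A).1 (subsingleton_of_bot_eq_top hbot.symm)
  obtain ⟨b, ⟨hb, hbT'⟩, hmin⟩ := exists_minimal_of_wellFoundedLT
    (fun b : Submodule A (X ⧸ t) => b ≠ ⊥ ∧ of k A b ∈ T')
    ⟨⊤, htop, mem_of_iso hquot ⟨Submodule.topEquiv.symm⟩⟩
  refine ⟨of k A b, ⟨hbT', Submodule.nontrivial_iff_ne_bot.2 hb, fun Z hZ f hf x => ?_⟩,
    fun Z hZ f => LinearMap.ext fun z => Subtype.ext ?_⟩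
  · have hrange : LinearMap.range (b.subtype ∘ₗ f) ≠ ⊥ := by
      rw [Ne, LinearMap.range_eq_bot]
      exact fun h => hf (LinearMap.ext fun z => Subtype.ext (LinearMap.congr_fun h z))
    obtain ⟨z, hz⟩ := hmin ⟨hrange, range_mem (Y := of k A (X ⧸ t)) hZ _⟩
      (LinearMap.range_le_iff_comap.2 (eq_top_iff.2 fun z _ => (f z).2)) x.2
    exact ⟨z, Subtype.ext hz⟩
  · exact LinearMap.congr_fun (htf Z hZ (b.subtype ∘ₗ f)) z

theorem IsRelSimple.isBrick [IsAlgClosed k] (hB : T.IsRelSimple B) : B.IsBrick := by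
  have := hB.nontrivial
  refine ⟨this, fun f => ?_⟩
  obtain ⟨c, hc⟩ := Module.End.exists_eigenvalue (f.restrictScalars k)
  obtain ⟨x, hx⟩ := hc.exists_hasEigenvector
  let g : B →ₗ[A] B := f - c • LinearMap.id
  have hgx : g x = 0 := sub_eq_zero.2 hx.apply_eq_smul
  have hg : g = 0 := by
    by_contra hg
    have hinj := (IsNoetherian.bijective_of_surjective_endomorphism g
      (hB.surjective_of_ne_zero B hB.mem g hg)).injective
    exact hx.2 (hinj (hgx.trans (map_zero g).symm))
  exact ⟨c, fun y => sub_eq_zero.1 (LinearMap.congr_fun hg y)⟩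

theorem le_of_bricks [IsAlgClosed k] {ι : Type*} {f : ι → FDMod k A}
    (hf : ∀ N : FDMod k A, N.IsBrick → ∃ i, N.Iso (f i)) (h : ∀ i, f i ∈ T' → f i ∈ T) :
    T' ≤ T := by
  by_contra hle
  obtain ⟨B, hB, hBT⟩ := exists_isRelSimple_isTorsionFree hle
  obtain ⟨i, hi⟩ := hf B hB.isBrick
  have := hB.nontrivial
  exact hBT.notMem (mem_of_iso (h i (mem_of_iso hB.mem hi)) (hi.map LinearEquiv.symm))

theorem finite_of_brickFinite [IsAlgClosed k] (hbf : BrickFinite k A) :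
    Finite (TorsionClass k A) := by
  obtain ⟨m, f, hf⟩ := hbf
  refine Finite.of_injective (fun T : TorsionClass k A => {i | f i ∈ T}) fun T T' h => ?_
  exact le_antisymm (le_of_bricks hf fun i => (Set.ext_iff.1 h i).1)
    (le_of_bricks hf fun i => (Set.ext_iff.1 h i).2)

end TorsionClass

/-! ### Universal elements and enough relative projectives -/

namespace TorsionClass

variable {T : TorsionClass k A} {M P Q X : FDMod k A}

theorem mem_of_isGeneratedBy (hQ : Q ∈ T) : X.IsGeneratedBy Q → X ∈ T
  | ⟨_, _, φ, hφ⟩ => T.mem_of_surjective (pi_mem fun _ => hQ) φ hφ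

/-- The class of all modules generated by `Q`, which is a torsion class because `Q` is projective
relative to a torsion class containing it. -/
def IsRelProjective.fac (hQ : T.IsRelProjective Q) (hQT : Q ∈ T) : TorsionClass k A where
  carrier := {X | X.IsGeneratedBy Q}
  mem_of_surjective := by
    rintro X Y ⟨ι, hι, φ, hφ⟩ f hf
    exact ⟨ι, hι, f ∘ₗ φ, hf.comp hφ⟩
  mem_of_extension := by
    rintro X p hp ⟨κ, hκ, ψ, hψ⟩
    have hker : of k A (LinearMap.ker p.mkQ) ∈ T := by
      rw [p.ker_mkQ]
      exact mem_of_isGeneratedBy hQT hp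
    obtain ⟨ι, hι, φ, hφ⟩ := hp
    obtain ⟨l, hl⟩ := (IsRelProjective.pi fun _ => hQ) (Z := of k A (X ⧸ p)) p.mkQ
      p.mkQ_surjective hker ψ
    have hsurj : Function.Surjective ((p.subtype ∘ₗ φ).coprod l) := by
      intro x
      obtain ⟨z, hz⟩ := hψ (p.mkQ x)
      obtain ⟨y, hy⟩ := hφ ⟨x - l z, (Submodule.Quotient.eq p).1 <|
        hz.symm.trans (LinearMap.congr_fun hl z).symm⟩
      exact ⟨(y, z), by simp [hy]⟩
    let e := LinearEquiv.sumArrowLequivProdArrow ι κ A Q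
    exact ⟨ι ⊕ κ, inferInstance, (p.subtype ∘ₗ φ).coprod l ∘ₗ e.toLinearMap,
      hsurj.comp e.surjective⟩
  mem_of_subsingleton _ _ := ⟨Fin 0, inferInstance, 0, fun _ => ⟨0, Subsingleton.elim _ _⟩⟩

theorem IsRelProjective.mem_fac (hQ : T.IsRelProjective Q) (hQT : Q ∈ T) : Q ∈ hQ.fac hQT :=
  ⟨Unit, inferInstance, LinearMap.proj (), LinearMap.proj_surjective _⟩

/-- Every member of `T` is a quotient of a relatively projective member of `T`, with kernel in `T`
as well. -/
def HasEnoughRelProjectives (T : TorsionClass k A) : Prop :=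
  ∀ M ∈ T, ∃ Q ∈ T, T.IsRelProjective Q ∧
    ∃ φ : Q →ₗ[A] M, Function.Surjective φ ∧ of k A (LinearMap.ker φ) ∈ T

/-- An element `e` of `P` is universal for `T` if it can be mapped to any element of any member of
`T`, i.e. if `a ↦ a • e` is a left `T`-approximation `A → P`. -/
def IsUniversal (T : TorsionClass k A) (e : P) : Prop :=
  ∀ X ∈ T, ∀ x : X, ∃ β : P →ₗ[A] X, β e = x

theorem exists_isUniversal (h : ∀ X ∈ T, X.IsGeneratedBy Q) :
    ∃ (n : ℕ) (e : Fin n → Q), T.IsUniversal (P := of k A (Fin n → Q)) e := by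
  let b := Module.finBasis k Q
  refine ⟨_, b, fun X hX x => ?_⟩
  obtain ⟨ι, _, φ, hφ⟩ := h X hX
  obtain ⟨y, rfl⟩ := hφ x
  let β : (Fin _ → Q) →ₗ[A] (ι → Q) :=
    LinearMap.pi fun i => ∑ j, b.repr (y i) j • LinearMap.proj j
  refine ⟨φ ∘ₗ β, congrArg φ (funext fun i => ?_)⟩
  conv_rhs => rw [← b.sum_repr (y i)]
  simp [β, -Basis.sum_repr]

namespace IsUniversal

variable {e : P}

theorem isRelProjective_quotient (he : T.IsUniversal e) (hP : T.IsRelProjective P) :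
    T.IsRelProjective (of k A (P ⧸ Submodule.span A {e})) := by
  intro Y Z g hg hker h
  obtain ⟨l, hl⟩ := hP g hg hker (h ∘ₗ Submodule.mkQ _)
  have hle : g (l e) = 0 := by
    rw [← LinearMap.comp_apply, hl, LinearMap.comp_apply, Submodule.mkQ_apply,
      (Submodule.Quotient.mk_eq_zero _).2 (Submodule.mem_span_singleton_self e), map_zero]
  obtain ⟨β, hβ⟩ := he _ hker ⟨l e, hle⟩
  let l' : P →ₗ[A] Y := l - (LinearMap.ker g).subtype ∘ₗ β
  have hl' : Submodule.span A {e} ≤ LinearMap.ker l' := by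
    rw [Submodule.span_singleton_le_iff_mem, LinearMap.mem_ker, LinearMap.sub_apply,
      LinearMap.comp_apply, hβ]
    exact sub_self _
  refine ⟨Submodule.liftQ _ l' hl', Submodule.linearMap_qext _ ?_⟩
  rw [LinearMap.comp_assoc, Submodule.liftQ_mkQ, LinearMap.comp_sub, hl, ← LinearMap.comp_assoc,
    LinearMap.comp_ker_subtype, LinearMap.zero_comp, sub_zero]

/-- An element of `ker φ` is the image of `e` under some `β : P → Q`, and by assumption `β` can be
corrected by a map vanishing at `e` so as to take values in `ker φ`. -/
theorem ker_mem (he : T.IsUniversal e) (hP : P ∈ T) (hQ : Q ∈ T) {φ : Q →ₗ[A] M}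
    (hφ : ∀ γ : P ⧸ Submodule.span A {e} →ₗ[A] M,
      ∃ γ' : P ⧸ Submodule.span A {e} →ₗ[A] Q, φ ∘ₗ γ' = γ) :
    of k A (LinearMap.ker φ) ∈ T := by
  obtain ⟨t, ht, htT, htf⟩ := T.exists_radical_ker φ
  suffices h : LinearMap.ker φ ≤ t by rwa [← ht.antisymm h]
  intro x hx
  obtain ⟨β, rfl⟩ := he Q hQ x
  have hβ : Submodule.span A {e} ≤ LinearMap.ker (φ ∘ₗ β) := by
    rwa [Submodule.span_singleton_le_iff_mem]
  obtain ⟨γ, hγ⟩ := hφ (Submodule.liftQ _ (φ ∘ₗ β) hβ)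
  let β' : P →ₗ[A] Q := β - γ ∘ₗ Submodule.mkQ _
  have hβ' : φ ∘ₗ β' = 0 := by
    rw [LinearMap.comp_sub, ← LinearMap.comp_assoc, hγ, Submodule.liftQ_mkQ, sub_self]
  have hzero : t.mkQ ∘ₗ β' = 0 :=
    htf P hP _ (by rw [← LinearMap.comp_assoc, Submodule.liftQ_mkQ, hβ'])
  have hβ'e : β' e = β e := by
    have he0 : (Submodule.span A {e}).mkQ e = 0 :=
      (Submodule.Quotient.mk_eq_zero _).2 (Submodule.mem_span_singleton_self e)
    rw [LinearMap.sub_apply, LinearMap.comp_apply, he0, map_zero, sub_zero]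
  rw [← hβ'e]
  exact (Submodule.Quotient.mk_eq_zero t).1 (LinearMap.congr_fun hzero e)

theorem hasEnoughRelProjectives (he : T.IsUniversal e) (hP : P ∈ T) (hPT : T.IsRelProjective P) :
    T.HasEnoughRelProjectives := by
  intro M hM
  let C : FDMod k A := of k A (P × P ⧸ Submodule.span A {e})
  have hC : C ∈ T := prod_mem hP (T.mem_of_surjective (Y := of k A (P ⧸ _)) hP
    (Submodule.mkQ _) (Submodule.mkQ_surjective _))
  have hCT : T.IsRelProjective C := hPT.prod (he.isRelProjective_quotient hPT)
  obtain ⟨ι, hι, φ, hφ⟩ := exists_right_approximation C M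
  have hQ : of k A (ι → C) ∈ T := pi_mem fun _ => hC
  refine ⟨_, hQ, .pi fun _ => hCT, φ, fun x => ?_, he.ker_mem hP hQ fun γ => ?_⟩
  · obtain ⟨β, rfl⟩ := he M hM x
    obtain ⟨γ', hγ'⟩ := hφ (β ∘ₗ LinearMap.fst A _ _)
    exact ⟨γ' (e, 0), LinearMap.congr_fun hγ' (e, 0)⟩
  · obtain ⟨γ', hγ'⟩ := hφ (γ ∘ₗ LinearMap.snd A _ _)
    refine ⟨γ' ∘ₗ LinearMap.inr A _ _, ?_⟩
    rw [← LinearMap.comp_assoc, hγ', LinearMap.comp_assoc, LinearMap.snd_comp_inr,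
      LinearMap.comp_id]

end IsUniversal

end TorsionClass

/-! ### Passing to a maximal smaller torsion class -/

namespace TorsionClass

variable {T T' : TorsionClass k A} {B M N Q X Y Z : FDMod k A}

theorem eq_inf_leftPerp_of_covBy (h : T ⋖ T') (hN : N ∈ T') [Nontrivial N]
    (hNT : T.IsTorsionFree N) : T = T' ⊓ leftPerp {N} := by
  refine ((h.eq_or_eq (le_inf h.le ?_) inf_le_left).resolve_right fun heq => ?_).symm
  · rintro X hX _ rfl
    exact hNT X hX
  · obtain ⟨x, hx⟩ := exists_ne (0 : N)
    rw [← heq] at hN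
    exact hx (LinearMap.congr_fun (hN.2 N rfl LinearMap.id) x)

theorem exists_hom_ne_zero_of_covBy (h : T ⋖ T') (hM : M ∈ T') [Nontrivial M]
    (hMT : T.IsTorsionFree M) (hN : N ∈ T') [Nontrivial N] (hNT : T.IsTorsionFree N) :
    ∃ f : M →ₗ[A] N, f ≠ 0 := by
  by_contra! hMN
  refine hMT.notMem ?_
  rw [eq_inf_leftPerp_of_covBy h hN hNT]
  exact ⟨hM, by rintro _ rfl; exact hMN⟩

/-- Modulo the torsion part of `ker g`, the map `g` becomes a split surjection whose kernel is a
quotient of `Z`, hence vanishes. -/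
theorem IsRelSimple.ker_mem (hB : T'.IsRelSimple B) (hBT : T.IsTorsionFree B) (h : T ⋖ T')
    (hZ : Z ∈ T') {g : Z →ₗ[A] B} (hg : g ≠ 0) : of k A (LinearMap.ker g) ∈ T' := by
  obtain ⟨t, ht, htT', htf⟩ := T'.exists_radical_ker g
  let E : FDMod k A := of k A (Z ⧸ t)
  let g' : E →ₗ[A] B := t.liftQ g ht
  have hg' : g' ∘ₗ t.mkQ = g := t.liftQ_mkQ g ht
  have hE : E ∈ T' := T'.mem_of_surjective hZ t.mkQ t.mkQ_surjective
  have hEtf : T.IsTorsionFree E := fun W hW f => htf W (h.le hW) f (hBT W hW _)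
  have hEnontrivial : Nontrivial E := by
    by_contra hE'
    rw [not_nontrivial_iff_subsingleton] at hE'
    exact hg (by rw [← hg', Subsingleton.elim g' 0, LinearMap.zero_comp])
  have := hB.nontrivial
  obtain ⟨s, hs⟩ := exists_hom_ne_zero_of_covBy h hB.mem hBT hE hEtf
  have hgs : Function.Bijective (g' ∘ₗ s) :=
    IsNoetherian.bijective_of_surjective_endomorphism _ <|
      hB.surjective_of_ne_zero B hB.mem _ fun h => hs (htf B hB.mem s h)
  let u := LinearEquiv.ofBijective (g' ∘ₗ s) hgs
  have hgu : g' ∘ₗ (LinearMap.id - s ∘ₗ u.symm ∘ₗ g') = 0 :=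
    LinearMap.ext fun x =>
      (map_sub g' _ _).trans (sub_eq_zero.2 (u.apply_symm_apply (g' x)).symm)
  have hid : LinearMap.id - s ∘ₗ u.symm.toLinearMap ∘ₗ g' = 0 := htf E hE _ hgu
  suffices hle : LinearMap.ker g ≤ t by rwa [← ht.antisymm hle]
  intro x hx
  have hgx : g' (t.mkQ x) = 0 := hx
  have hmk := LinearMap.congr_fun hid (t.mkQ x)
  rw [LinearMap.sub_apply, LinearMap.comp_apply, LinearMap.comp_apply, hgx, map_zero, map_zero,
    sub_zero] at hmk
  exact (Submodule.Quotient.mk_eq_zero t).1 hmk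

theorem HasEnoughRelProjectives.exists_isRightMinimal (hT : T.HasEnoughRelProjectives)
    (hM : M ∈ T) :
    ∃ Q ∈ T, T.IsRelProjective Q ∧ ∃ φ : Q →ₗ[A] M, Function.Surjective φ ∧
      IsRightMinimal φ ∧ of k A (LinearMap.ker φ) ∈ T := by
  obtain ⟨Q, hQ, hQT, φ, hφ, hker⟩ := hT M hM
  obtain ⟨p, r, hr, hφr, hmin⟩ := exists_retract_isRightMinimal φ
  have hrp (y : p) : r y = y := LinearMap.congr_fun hr y
  refine ⟨of k A p, T.mem_of_surjective hQ r fun y => ⟨y, hrp y⟩, hQT.of_retract hr,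
    φ ∘ₗ p.subtype, ?_, hmin, ?_⟩
  · rw [← hφr, ← LinearMap.comp_assoc] at hφ
    exact .of_comp hφ
  · refine T.mem_of_surjective hker
      (r.restrict fun x hx => (LinearMap.congr_fun hφr x).trans hx) ?_
    rintro ⟨y, hy⟩
    exact ⟨⟨y, hy⟩, Subtype.ext (hrp y)⟩

theorem ker_comp_ker_subtype_mem {f : X →ₗ[A] Y} {g : X →ₗ[A] Z}
    (h : of k A (LinearMap.ker (g ∘ₗ (LinearMap.ker f).subtype)) ∈ T) :
    of k A (LinearMap.ker (f ∘ₗ (LinearMap.ker g).subtype)) ∈ T :=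
  T.mem_of_surjective h
    ((((LinearMap.ker f).subtype ∘ₗ Submodule.subtype _).codRestrict (LinearMap.ker g)
      fun x => x.2).codRestrict _ fun x => x.1.2)
    fun x => ⟨⟨⟨x.1.1, x.2⟩, x.1.2⟩, rfl⟩

theorem mem_of_isRightMinimal (h : T ⋖ T') (hM : M ∈ T) (hQ : Q ∈ T')
    (hQT : T'.IsRelProjective Q) {φ : Q →ₗ[A] M} (hφ : Function.Surjective φ)
    (hmin : IsRightMinimal φ) (hker : of k A (LinearMap.ker φ) ∈ T') : Q ∈ T := by
  obtain ⟨B, hB, hBT⟩ := exists_isRelSimple_isTorsionFree h.lt.not_ge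
  have := hB.nontrivial
  rw [eq_inf_leftPerp_of_covBy h hB.mem hBT]
  refine ⟨hQ, ?_⟩
  rintro _ rfl g
  by_contra hg
  have hgker : g ∘ₗ (LinearMap.ker φ).subtype ≠ 0 := by
    intro h0
    obtain ⟨g', rfl⟩ :=
      exists_comp_eq_of_ker_le_ker hφ (LinearMap.le_ker_iff_comp_subtype_eq_zero.2 h0)
    exact hg (by rw [hBT M hM g', LinearMap.zero_comp])
  have hsurj : Function.Surjective (φ ∘ₗ (LinearMap.ker g).subtype) := by
    intro m
    obtain ⟨x, rfl⟩ := hφ m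
    obtain ⟨y, hy⟩ := hB.surjective_of_ne_zero _ hker _ hgker (g x)
    refine ⟨⟨x - y, ?_⟩, ?_⟩
    · rw [LinearMap.mem_ker, map_sub, sub_eq_zero]
      exact hy.symm
    · exact (map_sub φ x y).trans (by rw [y.2, sub_zero])
  have hkerT' := ker_comp_ker_subtype_mem (hB.ker_mem hBT h hker hgker)
  obtain ⟨l, hl⟩ := hQT (Y := of k A (LinearMap.ker g)) _ hsurj hkerT' φ
  refine hg (LinearMap.ext fun x => ?_)
  obtain ⟨y, rfl⟩ := hmin ((LinearMap.ker g).subtype ∘ₗ l) hl x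
  exact (l y).2

theorem hasEnoughRelProjectives_of_exists_surjective [IsAlgClosed k] (hbf : BrickFinite k A)
    (hT : ∀ M ∈ T, ∃ Q ∈ T, T.IsRelProjective Q ∧ ∃ φ : Q →ₗ[A] M, Function.Surjective φ) :
    T.HasEnoughRelProjectives := by
  obtain ⟨m, f, hf⟩ := hbf
  choose! Q hQ hQT φ hφ using hT
  let ι : Type := {i // f i ∈ T}
  let G : FDMod k A := of k A (∀ i : ι, Q (f i))
  have hG : G ∈ T := pi_mem fun i : ι => hQ _ i.2
  have hGT : T.IsRelProjective G := .pi fun i : ι => hQT _ i.2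
  have hle : T ≤ hGT.fac hG := le_of_bricks hf fun i hi => by
    let q := LinearMap.proj (R := A) (φ := fun i : ι => (Q (f i) : Type u)) ⟨i, hi⟩
    have hq : Function.Surjective q := LinearMap.proj_surjective _
    exact (hGT.fac hG).mem_of_surjective (hGT.mem_fac hG) (φ (f i) ∘ₗ q) ((hφ _ hi).comp hq)
  obtain ⟨n, e, he⟩ := exists_isUniversal hle
  exact he.hasEnoughRelProjectives (pi_mem fun _ => hG) (.pi fun _ => hGT)

theorem hasEnoughRelProjectives_of_covBy [IsAlgClosed k] (hbf : BrickFinite k A)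
    (hT' : T'.HasEnoughRelProjectives) (h : T ⋖ T') : T.HasEnoughRelProjectives := by
  refine hasEnoughRelProjectives_of_exists_surjective hbf fun M hM => ?_
  obtain ⟨Q, hQ, hQT', φ, hφ, hmin, hker⟩ := hT'.exists_isRightMinimal (h.le hM)
  exact ⟨Q, mem_of_isRightMinimal h hM hQ hQT' hφ hmin hker, hQT'.mono h.le, φ, hφ⟩

theorem hasEnoughRelProjectives_top [FiniteDimensional k A] :
    (⊤ : TorsionClass k A).HasEnoughRelProjectives := by
  intro M _
  have : Module.Finite A M := .of_restrictScalars_finite k A M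
  obtain ⟨n, φ, hφ⟩ := Module.Finite.exists_fin' A M
  exact ⟨of k A (Fin n → A), trivial, .of_projective, φ, hφ, trivial⟩

theorem hasEnoughRelProjectives [IsAlgClosed k] [FiniteDimensional k A] (hbf : BrickFinite k A)
    (T : TorsionClass k A) : T.HasEnoughRelProjectives := by
  have := finite_of_brickFinite hbf
  induction T using WellFoundedGT.induction with
  | ind T ih =>
  obtain rfl | hT := eq_or_ne T ⊤
  · exact hasEnoughRelProjectives_top
  · obtain ⟨T', hT'⟩ := exists_covBy_of_wellFoundedLT (isMax_iff_eq_top.not.2 hT)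
    exact hasEnoughRelProjectives_of_covBy hbf (ih T' hT'.lt) hT'

end TorsionClass

/-! ### Additive functions -/

/-- `θ` is additive on short exact sequences, i.e. it is a linear form on the Grothendieck group. -/
def IsAdditive (θ : FDMod k A → ℤ) : Prop :=
  ∀ ⦃L M N : FDMod k A⦄ (f : L →ₗ[A] M) (g : M →ₗ[A] N), Function.Injective f →
    Function.Exact f g → Function.Surjective g → θ M = θ L + θ N

namespace IsAdditive

variable {θ η : FDMod k A → ℤ} {M N : FDMod k A}

theorem sub (hθ : IsAdditive θ) (hη : IsAdditive η) : IsAdditive fun M => θ M - η M :=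
  fun _ _ _ f g hf hfg hg => by
    dsimp only
    rw [hθ f g hf hfg hg, hη f g hf hfg hg, add_sub_add_comm]

theorem submodule_add_quotient (hθ : IsAdditive θ) (p : Submodule A M) :
    θ (of k A p) + θ (of k A (M ⧸ p)) = θ M :=
  (hθ (L := of k A p) (N := of k A (M ⧸ p)) p.subtype p.mkQ p.injective_subtype
    (LinearMap.exact_subtype_mkQ p) p.mkQ_surjective).symm

theorem eq_zero_of_subsingleton (hθ : IsAdditive θ) [Subsingleton M] : θ M = 0 := by
  have h := hθ (0 : M →ₗ[A] M) (0 : M →ₗ[A] M) (Function.injective_of_subsingleton _)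
    (fun _ => ⟨fun _ => ⟨0, Subsingleton.elim _ _⟩, fun _ => rfl⟩)
    (Function.surjective_to_subsingleton _)
  lia

theorem eq_of_iso (hθ : IsAdditive θ) : M.Iso N → θ M = θ N
  | ⟨e⟩ => by
    have h := hθ (L := M) (N := of k A PUnit) e.toLinearMap 0 e.injective
      (fun x => ⟨fun _ => e.surjective x, fun _ => rfl⟩) (Function.surjective_to_subsingleton _)
    rw [h, hθ.eq_zero_of_subsingleton (M := of k A PUnit), add_zero]

theorem finrank_hom (P : FDMod k A) [Module.Projective A P] :
    IsAdditive fun M : FDMod k A => (finrank k (P →ₗ[A] M) : ℤ) := by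
  intro L M N f g hf hfg hg
  let F : (P →ₗ[A] L) →ₗ[k] (P →ₗ[A] M) := LinearMap.compRight k f
  let G : (P →ₗ[A] M) →ₗ[k] (P →ₗ[A] N) := LinearMap.compRight k g
  have hF : Function.Injective F := fun _ _ h => (LinearMap.cancel_left hf).1 h
  have hG : LinearMap.range G = ⊤ :=
    LinearMap.range_eq_top.2 fun h => Module.projective_lifting_property g h hg
  have hFG : LinearMap.ker G = LinearMap.range F := by
    ext h
    refine ⟨fun h0 => ?_, ?_⟩
    · have hf (x : P) : h x ∈ LinearMap.range f := (hfg _).1 (LinearMap.congr_fun h0 x)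
      obtain ⟨l, hl⟩ := Module.projective_lifting_property f.rangeRestrict (h.codRestrict _ hf)
        f.surjective_rangeRestrict
      exact ⟨l, LinearMap.ext fun x => congrArg Subtype.val (LinearMap.congr_fun hl x)⟩
    · rintro ⟨l, rfl⟩
      exact LinearMap.ext fun x => hfg.apply_apply_eq_zero (l x)
  have hdim := G.finrank_range_add_finrank_ker
  rw [hG, finrank_top, hFG, LinearMap.finrank_range_of_inj hF] at hdim
  lia

end IsAdditive

theorem finrank_ker_lcomp {L M N : Type*} [AddCommGroup L] [Module A L] [AddCommGroup M]
    [Module A M] [AddCommGroup N] [Module A N] {f : L →ₗ[A] M} {g : M →ₗ[A] N}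
    (hfg : Function.Exact f g) (hg : Function.Surjective g) (X : FDMod k A) :
    finrank k (LinearMap.ker (LinearMap.lcomp k X f)) = finrank k (N →ₗ[A] X) := by
  let g' : (N →ₗ[A] X) →ₗ[k] (M →ₗ[A] X) := LinearMap.lcomp k X g
  have hg' : Function.Injective g' := fun _ _ h => (LinearMap.cancel_right hg).1 h
  have hrange : LinearMap.ker (LinearMap.lcomp k X f) = LinearMap.range g' := by
    ext h
    refine ⟨fun h0 => exists_comp_eq_of_ker_le_ker hg fun x hx => ?_, ?_⟩
    · obtain ⟨y, rfl⟩ := (hfg x).1 hx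
      exact LinearMap.congr_fun h0 y
    · rintro ⟨l, rfl⟩
      exact LinearMap.ext fun y => (congrArg l (hfg.apply_apply_eq_zero y)).trans l.map_zero
  rw [hrange, LinearMap.finrank_range_of_inj hg']

namespace TorsionClass

variable {T : TorsionClass k A} {Q X : FDMod k A}

/-- If `Q₁ → Q₀ → Q → 0` is a minimal projective presentation, then
`θ = dim Hom(Q₀, -) - dim Hom(Q₁, -)` has these properties. -/
theorem IsRelProjective.exists_isAdditive [FiniteDimensional k A] (hQ : T.IsRelProjective Q) :
    ∃ θ : FDMod k A → ℤ, IsAdditive θ ∧ (∀ M ∈ T, θ M = finrank k (Q →ₗ[A] M)) ∧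
      ∀ N : FDMod k A, Subsingleton (Q →ₗ[A] N) → θ N ≤ 0 := by
  have : IsArtinianRing A := .of_finite k A
  have : Module.Finite A Q := .of_restrictScalars_finite k A Q
  obtain ⟨n, p, hp⟩ := Module.Finite.exists_fin' A Q
  obtain ⟨m, Q₁, π, _, hπ, hmin⟩ := exists_projective_cover A (LinearMap.ker p)
  let d : Q₁ →ₗ[A] (Fin n → A) := (LinearMap.ker p).subtype ∘ₗ π
  let d' (M : FDMod k A) : ((Fin n → A) →ₗ[A] M) →ₗ[k] (Q₁ →ₗ[A] M) := LinearMap.lcomp k _ d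
  have hd : Function.Exact d p := fun x =>
    ⟨fun hx => (hπ ⟨x, hx⟩).imp fun _ hy => congrArg Subtype.val hy,
      by rintro ⟨y, rfl⟩; exact (π y).2⟩
  have hker (M : FDMod k A) : finrank k (LinearMap.ker (d' M)) = finrank k (Q →ₗ[A] M) :=
    finrank_ker_lcomp hd hp M
  have hdim (M : FDMod k A) := (d' M).finrank_range_add_finrank_ker
  refine ⟨_, (IsAdditive.finrank_hom (of k A (Fin n → A))).sub (.finrank_hom (of k A Q₁)),
    fun M hM => ?_, fun N hN => ?_⟩
  · have hrange : LinearMap.range (d' M) = ⊤ := LinearMap.range_eq_top.2 fun f =>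
      hQ.exists_factorization (Q₀ := of k A (Fin n → A)) (Q₁ := of k A Q₁) hp hπ
        (fun _ => hmin.eq_top_of_sup_ker_eq_top hπ) hM f
    have h := hdim M
    rw [hrange, finrank_top, hker] at h
    dsimp only
    lia
  · have h := hdim N
    have hle := Submodule.finrank_le (LinearMap.range (d' N))
    rw [hker, finrank_zero_of_subsingleton (M := Q →ₗ[A] N)] at h
    dsimp only
    lia

theorem exists_isAdditive_pos [IsAlgClosed k] [FiniteDimensional k A] (hbf : BrickFinite k A)
    (hX : X ∈ T) [Nontrivial X] :
    ∃ θ : FDMod k A → ℤ, IsAdditive θ ∧ 0 < θ X ∧ (∀ M ∈ T, 0 ≤ θ M) ∧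
      ∀ N, T.IsTorsionFree N → θ N ≤ 0 := by
  obtain ⟨Q, hQ, hQT, φ, hφ, -⟩ := hasEnoughRelProjectives hbf T X hX
  obtain ⟨θ, hθ, hθT, hθF⟩ := hQT.exists_isAdditive
  have hφ0 : φ ≠ 0 := by
    rintro rfl
    obtain ⟨x, hx⟩ := exists_ne (0 : X)
    obtain ⟨y, rfl⟩ := hφ x
    exact hx rfl
  have : Nontrivial (Q →ₗ[A] X) := ⟨φ, 0, hφ0⟩
  refine ⟨θ, hθ, ?_, fun M hM => ?_, fun N hN => hθF N ⟨fun f g => ?_⟩⟩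
  · rw [hθT X hX]
    exact_mod_cast finrank_pos
  · rw [hθT M hM]
    exact Int.natCast_nonneg _
  · rw [hN Q hQ f, hN Q hQ g]

end TorsionClass

/-! ### Hom-orthogonal families -/

namespace FDMod

variable {S M N : FDMod k A}

theorem isSubquotientOf_of_surjective {q : Submodule A M} (f : q →ₗ[A] S)
    (hf : Function.Surjective f) : S.IsSubquotientOf M :=
  ⟨q, LinearMap.ker f, ⟨f.quotKerEquivOfSurjective hf⟩⟩

theorem IsSubquotientOf.trans_submodule {p : Submodule A M} :
    S.IsSubquotientOf (of k A p) → S.IsSubquotientOf M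
  | ⟨q, r, ⟨e⟩⟩ =>
    isSubquotientOf_of_surjective (e.toLinearMap ∘ₗ r.mkQ ∘ₗ (p.equivSubtypeMap q).symm.toLinearMap)
      (e.surjective.comp (r.mkQ_surjective.comp (LinearEquiv.surjective _)))

theorem IsSubquotientOf.trans_iso : S.IsSubquotientOf M → S.Iso N → N.IsSubquotientOf M
  | ⟨q, r, ⟨e⟩⟩, ⟨e'⟩ => ⟨q, r, ⟨e.trans e'⟩⟩

theorem exists_multiplicity {σ : Type*} [Fintype σ] (S : σ → FDMod k A) (M : FDMod k A)
    (hS : ∀ T : FDMod k A, IsSimpleModule A T → T.IsSubquotientOf M → ∃ i, T.Iso (S i)) :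
    ∃ m : σ → ℤ, ∀ θ : FDMod k A → ℤ, IsAdditive θ → θ M = ∑ i, m i * θ (S i) := by
  classical
  induction hd : finrank k M using Nat.strong_induction_on generalizing M with
  | h d ih =>
  subst hd
  obtain hM | hM := subsingleton_or_nontrivial M
  · exact ⟨0, fun θ hθ => by simp [hθ.eq_zero_of_subsingleton]⟩
  · obtain ⟨N, hN⟩ := IsCoatomic.exists_coatom (Submodule A M)
    have hlt : finrank k N < finrank k M :=
      Submodule.finrank_lt (s := N.restrictScalars k) (by simpa using hN.1)
    obtain ⟨m, hm⟩ := ih _ hlt (of k A N) (fun T hT h => hS T hT h.trans_submodule) rfl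
    have hsimple : IsSimpleModule A (M ⧸ N) := isSimpleModule_iff_isCoatom.2 hN
    obtain ⟨i, hi⟩ := hS (of k A (M ⧸ N)) hsimple <|
      isSubquotientOf_of_surjective (N.mkQ ∘ₗ Submodule.topEquiv.toLinearMap)
        (N.mkQ_surjective.comp (LinearEquiv.surjective _))
    refine ⟨m + Pi.single i 1, fun θ hθ => ?_⟩
    rw [← hθ.submodule_add_quotient N, hm θ hθ, hθ.eq_of_iso hi]
    simp [add_mul, Finset.sum_add_distrib, Pi.single_apply]

end FDMod

namespace HomOrthFamily

variable {I : Type v} {X : I → FDMod k A}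

/-- Apply `exists_isAdditive_pos` to the torsion class of all modules without nonzero maps to the
`X j` with `c j ≤ 0`. -/
theorem exists_isAdditive_sum_pos [IsAlgClosed k] [FiniteDimensional k A] (hX : HomOrthFamily X)
    (hbf : BrickFinite k A) (c : I → ℤ) {s : Finset I} {i : I} (hi : i ∈ s) (hci : 0 < c i) :
    ∃ θ : FDMod k A → ℤ, IsAdditive θ ∧ 0 < ∑ j ∈ s, c j * θ (X j) := by
  obtain ⟨hnontrivial, -, horth⟩ := hX
  let T : TorsionClass k A := .leftPerp (X '' {j | c j ≤ 0})
  have hpos (j : I) (hj : 0 < c j) : X j ∈ T := by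
    rintro _ ⟨l, hl, rfl⟩
    exact (horth j l (by rintro rfl; exact hj.not_ge hl)).1
  have hneg (j : I) (hj : c j ≤ 0) : T.IsTorsionFree (X j) :=
    fun _ hZ => hZ (X j) (Set.mem_image_of_mem X hj)
  have := hnontrivial i
  obtain ⟨θ, hθ, hθi, hθT, hθF⟩ := TorsionClass.exists_isAdditive_pos hbf (hpos i hci)
  refine ⟨θ, hθ, Finset.sum_pos' (fun j _ => ?_) ⟨i, hi, mul_pos hci hθi⟩⟩
  obtain hj | hj := lt_or_ge 0 (c j)
  · exact mul_nonneg hj.le (hθT _ (hpos j hj))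
  · exact mul_nonneg_of_nonpos_of_nonpos hj (hθF _ (hneg j hj))

theorem linearIndependent [IsAlgClosed k] [FiniteDimensional k A] (hX : HomOrthFamily X)
    (hbf : BrickFinite k A) {σ : Type*} [Fintype σ] {S : σ → FDMod k A} {m : I → σ → ℤ}
    (hm : ∀ j, ∀ θ : FDMod k A → ℤ, IsAdditive θ → θ (X j) = ∑ i, m j i * θ (S i)) :
    LinearIndependent ℤ m := by
  have nonpos {s : Finset I} {c : I → ℤ} (hc : ∑ j ∈ s, c j • m j = 0) {j : I} (hj : j ∈ s) :
      c j ≤ 0 := by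
    by_contra! hcj
    obtain ⟨θ, hθ, hpos⟩ := hX.exists_isAdditive_sum_pos hbf c hj hcj
    refine hpos.ne' ?_
    have hci (i : σ) : ∑ j ∈ s, c j * m j i = 0 := by simpa using congrFun hc i
    simp only [hm _ θ hθ, Finset.mul_sum]
    rw [Finset.sum_comm]
    simp only [← mul_assoc, ← Finset.sum_mul, hci, zero_mul, Finset.sum_const_zero]
  rw [linearIndependent_iff']
  intro s c hc j hj
  have hneg : ∑ j ∈ s, (-c) j • m j = 0 := by simpa using hc
  exact le_antisymm (nonpos hc hj) (neg_nonpos.1 (nonpos hneg hj))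

theorem card_le [IsAlgClosed k] [FiniteDimensional k A] (hX : HomOrthFamily X)
    (hbf : BrickFinite k A) {σ : Type*} [Finite σ] {S : σ → FDMod k A}
    (hS : ∀ j, ∀ T : FDMod k A, IsSimpleModule A T → T.IsSubquotientOf (X j) → ∃ i, T.Iso (S i))
    (s : Finset I) : s.card ≤ Nat.card σ := by
  cases nonempty_fintype σ
  choose m hm using fun j => FDMod.exists_multiplicity S (X j) (hS j)
  have hli : LinearIndependent ℤ fun j : s => m j :=
    (hX.linearIndependent hbf hm).comp _ Subtype.val_injective
  simpa [finrank_fintype_fun_eq_card] using hli.fintype_card_le_finrank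

end HomOrthFamily

/-- Let `A` be a brick-finite finite-dimensional algebra over an
algebraically closed field and let `{X i}` be a Hom-orthogonal set of
finite-dimensional `A`-modules. Then the cardinality of the set is at most the
number of isomorphism classes of simple `A`-modules occurring as a composition
factor of some member of the family. Here `S : σ → FDMod k A` is a complete
irredundant set of representatives of the simple `A`-modules. -/
theorem stmt3 {k A : Type u} [Field k] [IsAlgClosed k] [Ring A] [Algebra k A]
    [FiniteDimensional k A] (hbf : BrickFinite k A)
    (σ : Type u) [Finite σ] (S : σ → FDMod k A)
    (hsimple : ∀ i, IsSimpleModule A (S i).carrier)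
    (hnoniso : ∀ i j, i ≠ j → ¬(S i).Iso (S j))
    (hcomplete : ∀ T : FDMod k A, IsSimpleModule A T.carrier → ∃ i, T.Iso (S i))
    {I : Type v} (X : I → FDMod k A) (hX : HomOrthFamily X) :
    ∀ s : Finset I, s.card ≤ Nat.card {i : σ // ∃ j : I, (S i).IsSubquotientOf (X j)} := by
  have hS : ∀ j, ∀ T : FDMod k A, IsSimpleModule A T → T.IsSubquotientOf (X j) →
      ∃ i : {i : σ // ∃ j : I, (S i).IsSubquotientOf (X j)}, T.Iso (S i) := by
    intro j T hT hTX
    obtain ⟨i, hi⟩ := hcomplete T hT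
    exact ⟨⟨i, j, hTX.trans_iso hi⟩, hi⟩
  exact hX.card_le hbf hS
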